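/- Let s₁ ∈ (0,1), put λ = ω_p(s₁) and s₂′ = H_q(λ). Let J be an open subinterval of (s₁^((q−1)/(p−1)), 1) and let t : J → ℝ be differentiable and such that for every s₂ ∈ J one has 1 ≤ t(s₂) ≤ λ, τ(s₁,s₂,t(s₂)) ∈ (0,1), and (s₁, s₂, t(s₂)) satisfies the defining equation. Then the derivative t′(s₂) > 0 for every s₂ ∈ J with s₂ < s₂′, and t′(s₂) < 0 for every s₂ ∈ J with s₂ > s₂′. -/

import Mathlib

noncomputable section

open Real Set

/-- `H r z = r·z^(r-1) - (r-1)·z^r`. -/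
def H (r z : ℝ) : ℝ := r * z ^ (r - 1) - (r - 1) * z ^ r

/-- `ω` is the inverse of `H r`, mapping `(0,1]` into `[1, r/(r-1))`,
    so that `H r (ω s) = s` for `s ∈ (0,1]`. -/
def IsOmega (r : ℝ) (ω : ℝ → ℝ) : Prop :=
  ∀ s ∈ Set.Ioc (0 : ℝ) 1, ω s ∈ Set.Ico (1 : ℝ) (r / (r - 1)) ∧ H r (ω s) = s

/-- `τ(s₁,s₂,t) = ((p-q)/p)·(t^p - s₁)/(t^(p-q) - s₁/s₂)`. -/
def tau (p q s₁ s₂ t : ℝ) : ℝ :=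
  ((p - q) / p) * ((t ^ p - s₁) / (t ^ (p - q) - s₁ / s₂))

/-- `F(τ)` from the paper, where `ω` plays the role of `ω_q`. -/
def Ffun (p q : ℝ) (ω : ℝ → ℝ) (τ : ℝ) : ℝ :=
  (τ / (1 - ω τ)) * (p - (q * (p - 1) / (q - 1)) * ω τ)
    - q * (p * ω τ ^ (q - 1) - (p - 1) * ω τ ^ q)

/-- `A(s)` from the paper, where `ω` plays the role of `ω_q`. -/
def Afun (q : ℝ) (ω : ℝ → ℝ) (s : ℝ) : ℝ :=
  s * (ω s / ((q - 1) * (ω s - 1)) + ω s ^ q / s)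

lemma H_eq_mul {r z : ℝ} (hz : 0 < z) : H r z = z ^ (r - 1) * (r - (r - 1) * z) := by
  have h : z ^ r = z ^ (r - 1) * z := by
    rw [← rpow_add_one hz.ne']; ring_nf
  rw [H, h]; ring

lemma hasStrictDerivAt_H {r z : ℝ} (hz : 0 < z) :
    HasStrictDerivAt (H r) (r * (r - 1) * z ^ (r - 2) * (1 - z)) z := by
  have h1 := (Real.hasStrictDerivAt_rpow_const (p := r - 1) (Or.inl hz.ne')).const_mul r
  have h2 := (Real.hasStrictDerivAt_rpow_const (p := r) (Or.inl hz.ne')).const_mul (r - 1)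
  refine (h1.fun_sub h2).congr_deriv ?_
  have h : z ^ (r - 1) = z ^ (r - 2) * z := by
    rw [← rpow_add_one hz.ne']; ring_nf
  rw [h, show r - 1 - 1 = r - 2 by ring]; ring

lemma strictAntiOn_H {r : ℝ} (hr : 1 < r) : StrictAntiOn (H r) (Ici 1) := by
  refine strictAntiOn_of_deriv_neg (convex_Ici 1) ?_ ?_
  · intro z hz
    exact (hasStrictDerivAt_H (zero_lt_one.trans_le hz)).hasDerivAt.continuousAt.continuousWithinAt
  · intro z hz
    rw [interior_Ici] at hz
    have hz1 : 1 < z := hz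
    have hz0 : 0 < z := by linarith
    rw [(hasStrictDerivAt_H hz0).hasDerivAt.deriv]
    have : 0 < r * (r - 1) * z ^ (r - 2) := by
      have : 0 < r - 1 := by linarith
      positivity
    nlinarith

lemma H_one (r : ℝ) : H r 1 = 1 := by simp [H]

lemma IsOmega.mem_Ioo {r : ℝ} {ω : ℝ → ℝ} (hω : IsOmega r ω) {s : ℝ} (hs : s ∈ Ioo (0 : ℝ) 1) :
    ω s ∈ Ioo 1 (r / (r - 1)) := by
  obtain ⟨⟨h1, h2⟩, h3⟩ := hω s ⟨hs.1, hs.2.le⟩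
  refine ⟨lt_of_le_of_ne h1 fun h => ?_, h2⟩
  rw [← h, H_one] at h3
  exact hs.2.ne h3.symm

lemma IsOmega.hasDerivAt {r : ℝ} (hr : 1 < r) {ω : ℝ → ℝ} (hω : IsOmega r ω) {s : ℝ}
    (hs : s ∈ Ioo (0 : ℝ) 1) :
    HasDerivAt ω (r * (r - 1) * ω s ^ (r - 2) * (1 - ω s))⁻¹ s := by
  obtain ⟨h1, h2⟩ := hω.mem_Ioo hs
  have hz0 : 0 < ω s := by linarith
  have hs' : H r (ω s) = s := (hω s ⟨hs.1, hs.2.le⟩).2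
  have hne : r * (r - 1) * ω s ^ (r - 2) * (1 - ω s) ≠ 0 := by
    have h3 : r * (r - 1) ≠ 0 := by nlinarith
    have h4 : 1 - ω s ≠ 0 := by linarith
    have h5 := (rpow_pos_of_pos hz0 (r - 2)).ne'
    exact mul_ne_zero (mul_ne_zero h3 h5) h4
  have hd := hasStrictDerivAt_H (r := r) hz0
  have hg := (hd.to_localInverse hne).hasDerivAt
  have hgs : hd.localInverse _ _ _ hne (H r (ω s)) = ω s :=
    HasStrictFDerivAt.localInverse_apply_image _
  have hright := hd.eventually_right_inverse hne
  rw [hs'] at hg hgs hright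
  refine hg.congr_of_eventuallyEq ?_
  have hc := hg.continuousAt.eventually (lt_mem_nhds (hgs ▸ h1))
  filter_upwards [hright, hc, Ioo_mem_nhds hs.1 hs.2] with x hx1 hx2 hx3
  refine (strictAntiOn_H hr).injOn ?_ ?_ ?_
  · exact (hω.mem_Ioo hx3).1.le
  · exact hx2.le
  · rw [(hω x ⟨hx3.1, hx3.2.le⟩).2]; exact hx1.symm

lemma rpow_mul_sub_one_lt {q z w : ℝ} (hq : 1 < q) (hz : 1 < z) (hzw : z < w)
    (hw : w < q / (q - 1)) : w ^ q * (z - 1) < z ^ q * (w - 1) := by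
  have hw0 : 0 < w := by linarith
  have hz0 : 0 < z := by linarith
  have hwq : w * (q - 1) < q := (lt_div_iff₀ (by linarith)).1 hw
  have hb : 1 + q * (z / w - 1) < (1 + (z / w - 1)) ^ q := by
    refine one_add_mul_self_lt_rpow_one_add ?_ ?_ hq
    · have : 0 < z / w := by positivity
      linarith
    · rw [sub_ne_zero, Ne, div_eq_one_iff_eq hw0.ne']; exact hzw.ne
  rw [add_sub_cancel, div_rpow hz0.le hw0.le, lt_div_iff₀ (by positivity)] at hb
  have h1 : z - 1 ≤ (1 + q * (z / w - 1)) * (w - 1) := by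
    have : (1 + q * (z / w - 1)) * (w - 1) - (z - 1) = (w - z) * (q - w * (q - 1)) / w := by
      field_simp; ring
    have : 0 ≤ (w - z) * (q - w * (q - 1)) / w :=
      div_nonneg (mul_nonneg (by linarith) (by linarith)) hw0.le
    linarith
  have hwp : 0 < w ^ q := by positivity
  nlinarith

lemma sub_mul_rpow_lt {p q z : ℝ} (hq : 1 < q) (hqp : q < p) (hz : 1 < z)
    (hzp : z < p / (p - 1)) : (p - q) * z ^ q < q * (p - 1) * z - p * (q - 1) := by
  have hz0 : 0 < z := by linarith
  have hzp' : z * (p - 1) < p := (lt_div_iff₀ (by linarith)).1 hzp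
  have hb : 1 + q * (1 / z - 1) < (1 + (1 / z - 1)) ^ q := by
    refine one_add_mul_self_lt_rpow_one_add ?_ ?_ hq
    · have : 0 < 1 / z := by positivity
      linarith
    · rw [sub_ne_zero, Ne, div_eq_one_iff_eq hz0.ne']; exact hz.ne
  rw [add_sub_cancel, div_rpow zero_le_one hz0.le, one_rpow, lt_div_iff₀ (by positivity)] at hb
  have hP : 0 < q * (p - 1) * z - p * (q - 1) := by
    nlinarith [mul_pos (show 0 < q * (p - 1) by nlinarith) (sub_pos.2 hz)]
  have h1 : p - q ≤ (q * (p - 1) * z - p * (q - 1)) * (1 + q * (1 / z - 1)) := by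
    have h2 : (q * (p - 1) * z - p * (q - 1)) * (1 + q * (1 / z - 1)) - (p - q)
        = q * (q - 1) * ((z - 1) * (p - z * (p - 1))) / z := by
      field_simp; ring
    have h3 : 0 ≤ q * (q - 1) * ((z - 1) * (p - z * (p - 1))) / z :=
      div_nonneg (mul_nonneg (by nlinarith) (mul_nonneg (by linarith) (by linarith))) hz0.le
    linarith
  have hzq : 0 < z ^ q := by positivity
  calc (p - q) * z ^ q
      ≤ (q * (p - 1) * z - p * (q - 1)) * (1 + q * (1 / z - 1)) * z ^ q := by gcongr
    _ = (q * (p - 1) * z - p * (q - 1)) * ((1 + q * (1 / z - 1)) * z ^ q) := by ring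
    _ < (q * (p - 1) * z - p * (q - 1)) * 1 := by gcongr
    _ = _ := mul_one _

/-- Two weighted arithmetic-geometric mean inequalities, combined. -/
lemma le_convexComb_mul_rpow {κ q r z w t x y : ℝ} (hκ0 : 0 ≤ κ) (hκ1 : κ ≤ 1) (hq : 0 < q)
    (hr : 0 ≤ r) (hz : 0 < z) (hw : 0 < w) (ht : 0 < t) (hx : 0 < x) (hy : 0 < y)
    (hxy : y * w ^ r ≤ x * z ^ r) (htq : t ^ q = (1 - κ) * z ^ q + κ * w ^ q) :
    y * w ^ r ≤ ((1 - κ) * x + κ * y) * t ^ r := by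
  have h1κ : 0 ≤ 1 - κ := by linarith
  have hA : x ^ (1 - κ) * y ^ κ ≤ (1 - κ) * x + κ * y :=
    geom_mean_le_arith_mean2_weighted h1κ hκ0 hx.le hy.le (by ring)
  have hB : (z ^ q) ^ (1 - κ) * (w ^ q) ^ κ ≤ t ^ q := by
    rw [htq]
    exact geom_mean_le_arith_mean2_weighted h1κ hκ0 (by positivity) (by positivity) (by ring)
  have hC : (z ^ r) ^ (1 - κ) * (w ^ r) ^ κ ≤ t ^ r := by
    have h := rpow_le_rpow (by positivity) hB (div_nonneg hr hq.le)
    have e : ∀ u : ℝ, 0 < u → (u ^ q) ^ (r / q) = u ^ r := fun u hu => by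
      rw [← rpow_mul hu.le]; congr 1; field_simp
    rwa [mul_rpow (by positivity) (by positivity), ← rpow_mul (by positivity) (1 - κ),
      ← rpow_mul (by positivity) κ, mul_comm (1 - κ), mul_comm κ, rpow_mul (by positivity),
      rpow_mul (by positivity), e z hz, e w hw, e t ht] at h
  calc y * w ^ r = (y * w ^ r) ^ (1 - κ) * (y * w ^ r) ^ κ := by
        rw [← rpow_add (by positivity)]; simp
    _ ≤ (x * z ^ r) ^ (1 - κ) * (y * w ^ r) ^ κ := by gcongr
    _ = (x ^ (1 - κ) * y ^ κ) * ((z ^ r) ^ (1 - κ) * (w ^ r) ^ κ) := by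
        rw [mul_rpow hx.le (by positivity), mul_rpow hy.le (by positivity)]; ring
    _ ≤ _ := by gcongr

/-- The position of `z = ω_q(τ)` relative to `w = ω_q(s₂)` is determined by that of `λ = ω_p(s₁)`.
-/
lemma omega_tau_compare {p q s₁ s t z w l : ℝ} (hq : 1 < q) (hqp : q < p) (hs₁ : 0 < s₁)
    (hs : 0 < s) (hl1 : 1 < l) (hlp : l < p / (p - 1)) (hl : H p l = s₁) (ht1 : 1 ≤ t) (htl : t ≤ l)
    (hz1 : 1 < z) (hw1 : 1 < w) (hws : H q w = s) (hD : 0 < t ^ (p - q) - s₁ / s)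
    (hA : q * (p * z ^ (q - 1) - (p - 1) * z ^ q) * (t ^ (p - q) - s₁ / s)
      = (p - q) * s₁ * (w ^ q / s - 1))
    (hB : z ^ q * (t ^ (p - q) - s₁ / s) = t ^ p - s₁ / s * w ^ q) :
    z < p / (p - 1) ∧ (l < w → z < w) ∧ (w < l → w < z) := by
  have hz0 : 0 < z := by linarith
  have hw0 : 0 < w := by linarith
  have ht0 : 0 < t := by linarith
  have hq0 : 0 < q := by linarith
  have hzq : z ^ q = z ^ (q - 1) * z := by rw [← rpow_add_one hz0.ne']; ring_nf
  have hwq : w ^ q = w ^ (q - 1) * w := by rw [← rpow_add_one hw0.ne']; ring_nf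
  have htp : t ^ p = t ^ (p - q) * t ^ q := by rw [← rpow_add ht0]; ring_nf
  have hT : 0 < t ^ (p - q) := by positivity
  have hZ : 0 < z ^ (q - 1) := by positivity
  have hW : 0 < w ^ (q - 1) := by positivity
  have hws' := hws
  rw [H_eq_mul hw0] at hws'
  have hzp : z * (p - 1) < p := by
    have h1 : w ^ q / s - 1 = q * w ^ (q - 1) * (w - 1) / s := by
      rw [hwq, ← hws', div_sub_one (by rw [hws']; exact hs.ne')]; ring
    have h2 : 0 < (p - q) * s₁ * (w ^ q / s - 1) := by
      rw [h1]
      have : 0 < p - q := by linarith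
      have : 0 < w - 1 := by linarith
      positivity
    rw [← hA] at h2
    have h3 := pos_of_mul_pos_left h2 hD.le
    have h4 := pos_of_mul_pos_right h3 hq0.le
    rw [hzq] at h4
    have h5 : 0 < z ^ (q - 1) * (p - z * (p - 1)) := by linarith
    have h6 := pos_of_mul_pos_right h5 hZ.le
    linarith
  obtain ⟨κ, hκ⟩ : ∃ κ, κ = s₁ / s / t ^ (p - q) := ⟨_, rfl⟩
  have hκs : s₁ / s = κ * t ^ (p - q) := by rw [hκ]; field_simp
  have hκ0 : 0 < κ := by rw [hκ]; positivity
  have hκ1 : κ < 1 := by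
    rw [hκs] at hD; nlinarith
  have htq : t ^ q = (1 - κ) * z ^ q + κ * w ^ q := by
    rw [hκs, htp] at hB
    have : t ^ (p - q) * (t ^ q - ((1 - κ) * z ^ q + κ * w ^ q)) = 0 := by linarith
    rcases mul_eq_zero.1 this with h | h
    · exact absurd h hT.ne'
    · linarith
  refine ⟨(lt_div_iff₀ (by linarith)).2 hzp, fun hlw => ?_, fun hwl => ?_⟩
  · by_contra! h
    have h1 : w ^ q ≤ z ^ q := by gcongr
    have h2 : w ^ q ≤ t ^ q := by rw [htq]; nlinarith
    have h3 : w ≤ t := (rpow_le_rpow_iff hw0.le ht0.le hq0).1 h2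
    linarith
  · by_contra! h
    have hwp : w * (p - 1) < p := (lt_div_iff₀ (by linarith)).1 (hwl.trans hlp)
    have hHe : ∀ u : ℝ, 0 < u → H p u = u ^ (q - 1) * (p - (p - 1) * u) * u ^ (p - q) := by
      intro u hu
      rw [H_eq_mul hu, show p - 1 = (q - 1) + (p - q) by ring, rpow_add hu]; ring
    have hmono : H p w ≤ H p z :=
      (strictAntiOn_H (by linarith)).antitoneOn hz1.le hw1.le h
    rw [hHe w hw0, hHe z hz0] at hmono
    have key := le_convexComb_mul_rpow hκ0.le hκ1.le hq0 (by linarith) hz0 hw0 ht0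
      (mul_pos hZ (by linarith)) (mul_pos hW (by linarith)) hmono htq
    have hlt : s₁ < H p w := by
      rw [← hl]
      exact strictAntiOn_H (by linarith) hw1.le hl1.le hwl
    have hX : (1 - κ) * (z ^ (q - 1) * (p - (p - 1) * z)) = κ * (p - q) * w ^ (q - 1) * (w - 1) := by
      have hs1' : s₁ = κ * t ^ (p - q) * s := by rw [← hκs]; field_simp
      have h1 : (p - q) * s₁ * (w ^ q / s - 1) = (p - q) * (κ * t ^ (p - q)) * (w ^ q - s) := by
        rw [hs1']; field_simp
      rw [h1, hκs, hzq, hwq, ← hws'] at hA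
      have hne : q * t ^ (p - q) ≠ 0 := by positivity
      apply mul_left_cancel₀ hne
      linarith
    have hs1' : s₁ = κ * s * t ^ (p - q) := by
      have : s₁ = s₁ / s * s := by field_simp
      rw [this, hκs]; ring
    rw [← hHe w hw0, hX] at key
    have : (κ * (p - q) * w ^ (q - 1) * (w - 1) + κ * (w ^ (q - 1) * (p - (p - 1) * w)))
        = κ * s := by
      rw [← hws']; ring
    rw [this, ← hs1'] at key
    linarith

/-- Elimination of `z'` from the two differentiated relations. -/
lemma deriv_mul_eq {p q s₁ s T z w z' t' : ℝ} (hp : p ≠ 0) (hq : 1 < q) (hs : 0 < s) (hs₁ : s₁ ≠ 0)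
    (hT : 0 < T) (hz : 0 < z) (hw : 1 < w) (hws : H q w = s)
    (hA : p * (q * (q - 1) * z ^ (q - 2) * (1 - z) * z') * (T ^ (p - q) - s₁ / s) +
        p * H q z * (t' * (p - q) * T ^ (p - q - 1) - -(s₁ / s ^ 2)) =
      (p - q) * (t' * p * T ^ (p - 1)))
    (hB : z' * q * z ^ (q - 1) * (T ^ (p - q) - s₁ / s) +
        z ^ q * (t' * (p - q) * T ^ (p - q - 1) - -(s₁ / s ^ 2)) =
      t' * p * T ^ (p - 1) - (-(s₁ / s ^ 2) * w ^ q +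
        s₁ / s * ((q * (q - 1) * w ^ (q - 2) * (1 - w))⁻¹ * q * w ^ (q - 1)))) :
    t' * (T ^ (p - q - 1) * (w - 1) * (T ^ q * (q * (p - 1) * z - p * (q - 1)) - (p - q) * z ^ q)
      / (s₁ / s ^ 2)) = z ^ q * (w - 1) - w ^ q * (z - 1) := by
  have hw0 : 0 < w := by linarith
  have e1 : ∀ u : ℝ, 0 < u → u ^ (q - 1) = u ^ (q - 2) * u := fun u hu => by
    rw [← rpow_add_one hu.ne']; ring_nf
  have e2 : ∀ u : ℝ, 0 < u → u ^ q = u ^ (q - 2) * u ^ 2 := fun u hu => by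
    rw [← rpow_natCast u 2, ← rpow_add hu]; norm_num
  have e3 : T ^ (p - 1) = T ^ (p - q - 1) * T ^ q := by
    rw [← rpow_add hT]; ring_nf
  have hW : 0 < w ^ (q - 2) := by positivity
  have hq1 : q - 1 ≠ 0 := by linarith
  have hw1 : w - 1 ≠ 0 := by linarith
  have hS : s₁ / s ^ 2 ≠ 0 := by positivity
  have hlast : s₁ / s * ((q * (q - 1) * w ^ (q - 2) * (1 - w))⁻¹ * q * w ^ (q - 1))
      * ((q - 1) * (w - 1)) = -(s₁ / s ^ 2 * (s * w)) := by
    have : 1 - w ≠ 0 := by linarith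
    rw [e1 w hw0]
    field_simp
    ring
  rw [H_eq_mul hz, e1 z hz, e3] at hA
  rw [H_eq_mul hw0, e1 w hw0] at hws
  have hsw : s₁ / s ^ 2 * (s * w)
      = s₁ / s ^ 2 * (w ^ (q - 2) * w * (q - (q - 1) * w) * w) := by rw [hws]
  rw [hsw] at hlast
  have hA' : (q * (q - 1) * z ^ (q - 2) * (1 - z) * z') * (T ^ (p - q) - s₁ / s) +
      z ^ (q - 2) * z * (q - (q - 1) * z) * (t' * (p - q) * T ^ (p - q - 1) - -(s₁ / s ^ 2)) =
      (p - q) * (t' * (T ^ (p - q - 1) * T ^ q)) := by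
    apply mul_left_cancel₀ hp
    linear_combination hA
  generalize s₁ / s * ((q * (q - 1) * w ^ (q - 2) * (1 - w))⁻¹ * q * w ^ (q - 1)) = L at hB hlast
  rw [e1 z hz, e2 z hz, e2 w hw0, e3] at hB
  rw [← mul_div_assoc, div_eq_iff hS, e2 z hz, e2 w hw0]
  linear_combination (-(q - 1) * (z - 1) * (w - 1)) * hB - z * (w - 1) * hA' + (z - 1) * hlast

/-- monotonicity of `t(s₁,·)`: increasing before `s₂' = H_q(ω_p(s₁))`,
decreasing after it. -/
theorem stmt_0 (p q : ℝ) (hq : 1 < q) (hqp : q < p)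
    (ωp ωq : ℝ → ℝ) (hωp : IsOmega p ωp) (hωq : IsOmega q ωq)
    (s₁ : ℝ) (hs₁ : s₁ ∈ Set.Ioo (0 : ℝ) 1)
    (a b : ℝ) (hJ : Set.Ioo a b ⊆ Set.Ioo (s₁ ^ ((q - 1) / (p - 1))) 1)
    (t : ℝ → ℝ)
    (hdiff : ∀ s₂ ∈ Set.Ioo a b, DifferentiableAt ℝ t s₂)
    (hrange : ∀ s₂ ∈ Set.Ioo a b, 1 ≤ t s₂ ∧ t s₂ ≤ ωp s₁)
    (htau : ∀ s₂ ∈ Set.Ioo a b, tau p q s₁ s₂ (t s₂) ∈ Set.Ioo (0 : ℝ) 1)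
    (heq : ∀ s₂ ∈ Set.Ioo a b,
      q * (p * ωq (tau p q s₁ s₂ (t s₂)) ^ (q - 1)
            - (p - 1) * ωq (tau p q s₁ s₂ (t s₂)) ^ q)
          * (t s₂ ^ (p - q) - s₁ / s₂)
        = (p - q) * s₁ * (ωq s₂ ^ q / s₂ - 1)) :
    (∀ s₂ ∈ Set.Ioo a b, s₂ < H q (ωp s₁) → 0 < deriv t s₂) ∧
    (∀ s₂ ∈ Set.Ioo a b, H q (ωp s₁) < s₂ → deriv t s₂ < 0) := by
  have hs0 := hs₁.1
  have hq0 : 0 < q := by linarith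
  have hlmem := hωp.mem_Ioo hs₁
  have hlH := (hωp s₁ ⟨hs₁.1, hs₁.2.le⟩).2
  set l := ωp s₁
  have hs₁s : ∀ s ∈ Ioo a b, s ∈ Ioo (0 : ℝ) 1 ∧ s₁ < s := by
    intro s hs
    have h := hJ hs
    have h1 : s₁ < s := by
      refine lt_of_le_of_lt ?_ h.1
      calc s₁ = s₁ ^ (1 : ℝ) := (rpow_one _).symm
        _ ≤ s₁ ^ ((q - 1) / (p - 1)) := by
          refine rpow_le_rpow_of_exponent_ge hs0 hs₁.2.le ?_
          rw [div_le_one (by linarith)]; linarith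
    exact ⟨⟨hs0.trans h1, h.2⟩, h1⟩
  have hDpos : ∀ s ∈ Ioo a b, 0 < t s ^ (p - q) - s₁ / s := by
    intro s hs
    have h1 : s₁ / s < 1 := (div_lt_one (hs₁s s hs).1.1).2 (hs₁s s hs).2
    have h2 : 1 ≤ t s ^ (p - q) := one_le_rpow (hrange s hs).1 (by linarith)
    linarith
  have hA : ∀ s ∈ Ioo a b, p * H q (ωq (tau p q s₁ s (t s))) * (t s ^ (p - q) - s₁ / s)
      = (p - q) * (t s ^ p - s₁) := by
    intro s hs
    have hD := hDpos s hs
    rw [(hωq _ ⟨(htau s hs).1, (htau s hs).2.le⟩).2, tau]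
    have : p ≠ 0 := by linarith
    field_simp
  have hB : ∀ s ∈ Ioo a b, ωq (tau p q s₁ s (t s)) ^ q * (t s ^ (p - q) - s₁ / s)
      = t s ^ p - s₁ / s * ωq s ^ q := by
    intro s hs
    have h1 := heq s hs
    have h2 := hA s hs
    rw [H] at h2
    have hne : p - q ≠ 0 := by linarith
    apply mul_left_cancel₀ hne
    linear_combination h2 - h1
  have main : ∀ s ∈ Ioo a b, ∃ c > 0, ∃ z w, 1 < z ∧ 1 < w ∧ z < q / (q - 1) ∧ w < q / (q - 1) ∧
      H q w = s ∧ (l < w → z < w) ∧ (w < l → w < z) ∧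
      deriv t s * c = z ^ q * (w - 1) - w ^ q * (z - 1) := by
    intro s hs
    have hsI := (hs₁s s hs).1
    have hD := hDpos s hs
    have hwm := hωq.mem_Ioo hsI
    have hzm := hωq.mem_Ioo (htau s hs)
    have hwH := (hωq s ⟨hsI.1, hsI.2.le⟩).2
    obtain ⟨hzp, hlw, hwl⟩ := omega_tau_compare hq hqp hs0 hsI.1 hlmem.1 hlmem.2 hlH
      (hrange s hs).1 (hrange s hs).2 hzm.1 hwm.1 hwH hD (heq s hs) (hB s hs)
    have ht0 : 0 < t s := by linarith [(hrange s hs).1]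
    have hnhds : ∀ᶠ x in nhds s, x ∈ Ioo a b := Ioo_mem_nhds hs.1 hs.2
    have ht' := (hdiff s hs).hasDerivAt
    have hinv : HasDerivAt (fun x => s₁ / x) (-(s₁ / s ^ 2)) s := by
      refine ((hasDerivAt_inv hsI.1.ne').const_mul s₁).congr_deriv ?_ |>.congr_of_eventuallyEq ?_
      · ring
      · exact Filter.Eventually.of_forall fun x => div_eq_mul_inv _ _
    have hD' := (ht'.rpow_const (p := p - q) (Or.inl ht0.ne')).fun_sub hinv
    have htp' := ht'.rpow_const (p := p) (Or.inl ht0.ne')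
    have hw' := hωq.hasDerivAt hq hsI
    have hτ' : ∃ d, HasDerivAt (fun x => tau p q s₁ x (t x)) d s :=
      ⟨_, ((htp'.sub_const s₁).fun_div hD' hD.ne').const_mul ((p - q) / p)⟩
    obtain ⟨d, hτ'⟩ := hτ'
    have hz' := (hωq.hasDerivAt hq (htau s hs)).comp s hτ'
    have hz'' : HasDerivAt (fun x => ωq (tau p q s₁ x (t x))) _ s := hz'
    clear hz'
    generalize (_ : ℝ)⁻¹ * d = z' at hz''
    have hz0 : 0 < ωq (tau p q s₁ s (t s)) := by linarith [hzm.1]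
    have hw0 : 0 < ωq s := by linarith [hwm.1]
    have hHz := (hasStrictDerivAt_H (r := q) hz0).hasDerivAt.comp s hz''
    have dA := ((hHz.const_mul p).fun_mul hD').unique
      ((((htp'.sub_const s₁).const_mul (p - q))).congr_of_eventuallyEq
        (by filter_upwards [hnhds] with x hx using hA x hx))
    have dB := ((hz''.rpow_const (p := q) (Or.inl hz0.ne')).fun_mul hD').unique
      ((htp'.fun_sub (hinv.fun_mul (hw'.rpow_const (p := q) (Or.inl hw0.ne')))).congr_of_eventuallyEq
        (by filter_upwards [hnhds] with x hx using hB x hx))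
    simp only [Function.comp] at dA
    have hBound := sub_mul_rpow_lt hq hqp hzm.1 hzp
    refine ⟨_, ?_, _, _, hzm.1, hwm.1, hzm.2, hwm.2, hwH, hlw, hwl,
      deriv_mul_eq (by linarith) hq hsI.1 hs0.ne' ht0 hz0 hwm.1 hwH dA dB⟩
    have hTq : 1 ≤ t s ^ q := one_le_rpow (hrange s hs).1 hq0.le
    have hzq : 0 < ωq (tau p q s₁ s (t s)) ^ q := by positivity
    have hw1 : 0 < ωq s - 1 := by linarith [hwm.1]
    have hbr : 0 < t s ^ q * (q * (p - 1) * ωq (tau p q s₁ s (t s)) - p * (q - 1))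
        - (p - q) * ωq (tau p q s₁ s (t s)) ^ q := by
      have h1 : 0 < (p - q) * ωq (tau p q s₁ s (t s)) ^ q := mul_pos (by linarith) hzq
      nlinarith
    have hS : 0 < s₁ / s ^ 2 := div_pos hs0 (pow_pos hsI.1 2)
    have hT : 0 < t s ^ (p - q - 1) := rpow_pos_of_pos ht0 _
    exact div_pos (mul_pos (mul_pos hT hw1) hbr) hS
  refine ⟨fun s hs hsl => ?_, fun s hs hsl => ?_⟩
  · obtain ⟨c, hc, z, w, hz, hw, hzq, hwq, hws, h1, -, h⟩ := main s hs
    have hlw : l < w := by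
      rw [← hws] at hsl
      exact ((strictAntiOn_H hq).lt_iff_gt hw.le hlmem.1.le).1 hsl
    have h2 := rpow_mul_sub_one_lt hq hz (h1 hlw) hwq
    exact pos_of_mul_pos_left (by rw [h]; linarith) hc.le
  · obtain ⟨c, hc, z, w, hz, hw, hzq, hwq, hws, -, h1, h⟩ := main s hs
    have hwl : w < l := by
      rw [← hws] at hsl
      exact ((strictAntiOn_H hq).lt_iff_gt hlmem.1.le hw.le).1 hsl
    have h2 := rpow_mul_sub_one_lt hq hw (h1 hwl) hzq
    exact neg_of_mul_neg_left (by rw [h]; linarith) hc.le
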